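/- There exists δ > 0 such that for all real u, v, w with |u|, |v|, |w| < δ and all real z with 0 ≤ z < 1, ∑_{k ≥ n+s, n ≥ s ≥ 1} G_0^*(k,n,s;z) u^{k−n−s} v^{n−s} w^{s−1} = (z/(1−u−v+uv−w)) · ₃F₂((1−u)/2, 1/2, 1; α*, β*; z²), where α* and β* are the two (possibly complex) roots of X² − (3 − u/2 − v/2)X + (9 − 3u − 3v + uv − w)/4 = 0, and the series converges absolutely. -/

import Mathlib

open scoped BigOperators

/-- The multiple `t`-value of an index `K = (k₁, …, kₙ)` (a list of positive integers):
`t(K) = ∑_{m₁ > ⋯ > mₙ > 0, all mᵢ odd} 1 / (m₁^{k₁} ⋯ mₙ^{kₙ})`. -/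
noncomputable def multT (K : List ℕ) : ℝ :=
  ∑' m : Fin K.length → ℕ,
    if (∀ i, Odd (m i)) ∧ (∀ i j : Fin K.length, i < j → m j < m i) then
      ∏ i, ((m i : ℝ) ^ K.get i)⁻¹
    else 0

/-- The multiple `t`-star value of an index `K = (k₁, …, kₙ)`:
`t*(K) = ∑_{m₁ ≥ ⋯ ≥ mₙ > 0, all mᵢ odd} 1 / (m₁^{k₁} ⋯ mₙ^{kₙ})`. -/
noncomputable def multTStar (K : List ℕ) : ℝ :=
  ∑' m : Fin K.length → ℕ,
    if (∀ i, Odd (m i)) ∧ (∀ i j : Fin K.length, i < j → m j ≤ m i) then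
      ∏ i, ((m i : ℝ) ^ K.get i)⁻¹
    else 0

/-- An index (list of positive integers) is admissible if its first entry is `> 1`. -/
def Admissible (K : List ℕ) : Prop := (∀ i ∈ K, 1 ≤ i) ∧ 2 ≤ K.headI

instance : DecidablePred Admissible := fun K =>
  inferInstanceAs (Decidable ((∀ i ∈ K, 1 ≤ i) ∧ 2 ≤ K.headI))

/-- `G0h k n s` is the sum of multiple `t`-values over all admissible indices of
weight `k`, depth `n` and height `s`. -/
noncomputable def G0h (k n s : ℕ) : ℝ :=
  ∑' K : List ℕ,
    if Admissible K ∧ K.sum = k ∧ K.length = n ∧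
        K.countP (fun i => decide (2 ≤ i)) = s then
      multT K
    else 0

/-- `G0hStar k n s` is the sum of multiple `t`-star values over all admissible indices of
weight `k`, depth `n` and height `s`. -/
noncomputable def G0hStar (k n s : ℕ) : ℝ :=
  ∑' K : List ℕ,
    if Admissible K ∧ K.sum = k ∧ K.length = n ∧
        K.countP (fun i => decide (2 ≤ i)) = s then
      multTStar K
    else 0

/-- `G0d k n` is the sum of multiple `t`-values over all admissible indices of
weight `k` and depth `n`. -/
noncomputable def G0d (k n : ℕ) : ℝ :=
  ∑' K : List ℕ,
    if Admissible K ∧ K.sum = k ∧ K.length = n then multT K else 0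

/-- `G0dStar k n` is the sum of multiple `t`-star values over all admissible indices of
weight `k` and depth `n`. -/
noncomputable def G0dStar (k n : ℕ) : ℝ :=
  ∑' K : List ℕ,
    if Admissible K ∧ K.sum = k ∧ K.length = n then multTStar K else 0

/-- The single `t`-value `t(n) = ∑_{m odd, m > 0} 1 / m^n`. -/
noncomputable def tval (n : ℕ) : ℝ := ∑' m : ℕ, 1 / (2 * (m : ℝ) + 1) ^ n

/-- The ascending Pochhammer symbol `(a)ₙ = a (a+1) ⋯ (a+n-1)`. -/
noncomputable def poch (a : ℂ) (n : ℕ) : ℂ := ∏ i ∈ Finset.range n, (a + i)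

/-- The generalized hypergeometric function `₃F₂(a, b, c; d, e; z)`. -/
noncomputable def hyp3F2 (a b c d e z : ℂ) : ℂ :=
  ∑' n : ℕ, poch a n * poch b n * poch c n /
      ((n.factorial : ℂ) * poch d n * poch e n) * z ^ n

/-- The generalized hypergeometric function with upper parameters `as` and lower
parameters `bs`. -/
noncomputable def hypF (as bs : List ℂ) (z : ℂ) : ℂ :=
  ∑' n : ℕ, (as.map fun a => poch a n).prod /
      ((n.factorial : ℂ) * (bs.map fun b => poch b n).prod) * z ^ n

/-- The one-variable multiple polylogarithm
`L_K(z) = ∑_{m₁ > ⋯ > mₙ > 0, all mᵢ odd} z^{m₁} / (m₁^{k₁} ⋯ mₙ^{kₙ})`. -/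
noncomputable def Lt (K : List ℕ) (z : ℝ) : ℝ :=
  ∑' m : Fin K.length → ℕ,
    if h : (∀ i, Odd (m i)) ∧ (∀ i j : Fin K.length, i < j → m j < m i) ∧
        0 < K.length then
      z ^ (m ⟨0, h.2.2⟩) * ∏ i, ((m i : ℝ) ^ K.get i)⁻¹
    else 0

/-- The one-variable star multiple polylogarithm
`L*_K(z) = ∑_{m₁ ≥ ⋯ ≥ mₙ > 0, all mᵢ odd} z^{m₁} / (m₁^{k₁} ⋯ mₙ^{kₙ})`. -/
noncomputable def LtStar (K : List ℕ) (z : ℝ) : ℝ :=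
  ∑' m : Fin K.length → ℕ,
    if h : (∀ i, Odd (m i)) ∧ (∀ i j : Fin K.length, i < j → m j ≤ m i) ∧
        0 < K.length then
      z ^ (m ⟨0, h.2.2⟩) * ∏ i, ((m i : ℝ) ^ K.get i)⁻¹
    else 0

/-- `G0hz k n s z` is the sum of `L_K(z)` over all admissible indices `K` of
weight `k`, depth `n` and height `s`. -/
noncomputable def G0hz (k n s : ℕ) (z : ℝ) : ℝ :=
  ∑' K : List ℕ,
    if Admissible K ∧ K.sum = k ∧ K.length = n ∧
        K.countP (fun i => decide (2 ≤ i)) = s then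
      Lt K z
    else 0

/-- `G0hzStar k n s z` is the sum of `L*_K(z)` over all admissible indices `K` of
weight `k`, depth `n` and height `s`. -/
noncomputable def G0hzStar (k n s : ℕ) (z : ℝ) : ℝ :=
  ∑' K : List ℕ,
    if Admissible K ∧ K.sum = k ∧ K.length = n ∧
        K.countP (fun i => decide (2 ≤ i)) = s then
      LtStar K z
    else 0

def cc (u v w : ℝ) : ℕ → ℝ
  | 0 => 0
  | 1 => v
  | (k+2) => w * u ^ k

def dd (u : ℝ) : ℕ → ℝ
  | 0 => 0
  | 1 => 0
  | (k+2) => u ^ k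

noncomputable def cl (u v w : ℝ) (K : List ℕ) : ℝ := (K.map (cc u v w)).prod

noncomputable def TT : List ℕ → ℕ → ℝ
  | [], _ => 1
  | k :: K, N => ∑ j ∈ Finset.range (N+1), ((2 * (j:ℝ) + 1) ^ k)⁻¹ * TT K j

noncomputable def ff (u v w : ℝ) (N : ℕ) : ℝ :=
  v / (2 * (N:ℝ) + 1) + w / ((2 * (N:ℝ) + 1) * (2 * (N:ℝ) + 1 - u))

noncomputable def PP (u v w : ℝ) (N : ℕ) : ℝ :=
  ∏ j ∈ Finset.range (N+1), (1 - ff u v w j)⁻¹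

lemma TT_nonneg (K : List ℕ) : ∀ N, 0 ≤ TT K N := by
  induction K with
  | nil => intro N; simp [TT]
  | cons k K ih =>
    intro N
    simp only [TT]
    exact Finset.sum_nonneg fun j _ => mul_nonneg (by positivity) (ih j)

lemma TT_le (K : List ℕ) : ∀ N : ℕ, TT K N ≤ ((N:ℝ)+1) ^ K.length := by
  induction K with
  | nil => intro N; simp [TT]
  | cons k K ih =>
    intro N
    simp only [TT, List.length_cons]
    calc _ ≤ ∑ j ∈ Finset.range (N+1), ((N:ℝ)+1) ^ K.length := by
          refine Finset.sum_le_sum fun j hj => ?_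
          have hj' : (j:ℝ) ≤ N := by
            have := Finset.mem_range.1 hj
            exact_mod_cast Nat.lt_succ_iff.1 this
          have h1 : ((2 * (j:ℝ) + 1) ^ k)⁻¹ ≤ 1 := by
            apply inv_le_one_of_one_le₀
            apply one_le_pow₀
            have : (0:ℝ) ≤ j := by positivity
            linarith
          calc _ ≤ 1 * TT K j := mul_le_mul_of_nonneg_right h1 (TT_nonneg K j)
            _ = TT K j := one_mul _
            _ ≤ _ := ih j
            _ ≤ _ := by gcongr
      _ = _ := by simp; ring

lemma hasSum_prod_nonneg {α β : Type*} {f : α × β → ℝ} {g : α → ℝ} {a : ℝ} (h0 : ∀ p, 0 ≤ f p)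
    (hg : ∀ x, HasSum (fun y => f (x, y)) (g x)) (ha : HasSum g a) : HasSum f a := by
  have hs : Summable f := by
    rw [summable_prod_of_nonneg h0]
    refine ⟨fun x => (hg x).summable, ?_⟩
    simp only [(hg _).tsum_eq]
    exact ha.summable
  have := hs.hasSum.prod_fiberwise hg
  rw [← this.unique ha]
  exact hs.hasSum

lemma hs_congr {α : Type*} {f g : α → ℝ} {a : ℝ} (h : HasSum f a) (e : ∀ x, g x = f x) :
    HasSum g a := by
  rwa [show g = f from funext e]

lemma cons_sum {n : ℕ} (φ : (Fin (n+1) → ℕ) → ℝ) (h0 : ∀ m, 0 ≤ φ m)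
    (hodd : ∀ m, ¬ Odd (m 0) → φ m = 0) (g : ℕ → ℝ) (s : ℝ)
    (hg : ∀ j : ℕ, HasSum (fun m' : Fin n → ℕ => φ (Fin.cons (2*j+1) m')) (g j))
    (hs : HasSum g s) : HasSum φ s := by
  have hinj : Function.Injective
      (fun p : ℕ × (Fin n → ℕ) => (Fin.cons (2*p.1+1) p.2 : Fin (n+1) → ℕ)) := by
    rintro ⟨a, b⟩ ⟨c, d⟩ h
    have h := Fin.cons_injective2 h
    simp at h
    ext1
    · exact h.1
    · exact h.2
  rw [← hinj.hasSum_iff]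
  · exact hasSum_prod_nonneg (fun p => h0 _) hg hs
  · intro m hm
    apply hodd
    rintro ⟨j, hj⟩
    apply hm
    refine ⟨(j, Fin.tail m), ?_⟩
    simp only
    rw [← hj]
    exact Fin.cons_self_tail m

lemma tail_sum (K : List ℕ) : ∀ N : ℕ, HasSum (fun m : Fin K.length → ℕ =>
    if (∀ i, Odd (m i)) ∧ (∀ i j, i < j → m j ≤ m i) ∧ (∀ i, m i ≤ 2*N+1) then
      ∏ i, ((m i : ℝ) ^ K.get i)⁻¹ else 0) (TT K N) := by
  induction K with
  | nil =>
    intro N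
    have : Unique (Fin ([] : List ℕ).length → ℕ) := inferInstanceAs (Unique (Fin 0 → ℕ))
    have := hasSum_unique (fun m : Fin ([] : List ℕ).length → ℕ =>
      if (∀ i, Odd (m i)) ∧ (∀ i j, i < j → m j ≤ m i) ∧ (∀ i, m i ≤ 2*N+1) then
      ∏ i, ((m i : ℝ) ^ ([] : List ℕ).get i)⁻¹ else 0)
    convert this using 1
    rw [if_pos]
    · simp [TT]
    · exact ⟨fun i => i.elim0, fun i => i.elim0, fun i => i.elim0⟩
  | cons k K ih =>
    intro N
    refine cons_sum (n := K.length) _ ?_ ?_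
      (fun j => if j < N + 1 then ((2 * (j:ℝ) + 1) ^ k)⁻¹ * TT K j else 0) _ ?_ ?_
    · intro m
      split_ifs
      · positivity
      · exact le_rfl
    · intro m hm
      rw [if_neg]
      exact fun h => hm (h.1 0)
    · intro j
      split_ifs with hj
      · refine hs_congr ((ih j).mul_left (((2 * (j:ℝ) + 1) ^ k)⁻¹)) fun m => ?_
        rw [mul_ite, mul_zero]
        refine if_congr ?_ ?_ rfl
        · constructor
          · rintro ⟨h1, h2, h3⟩
            refine ⟨fun i => h1 i.succ, fun a b hab => h2 a.succ b.succ (Fin.succ_lt_succ_iff.2 hab),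
              fun i => h2 0 i.succ (Fin.succ_pos i)⟩
          · rintro ⟨h1, h2, h3⟩
            refine ⟨fun i => ?_, fun a b => ?_, fun i => ?_⟩
            · refine Fin.cases ?_ (fun i => ?_) i
              · exact ⟨j, rfl⟩
              · exact h1 i
            · refine Fin.cases ?_ (fun a => ?_) a
              · refine Fin.cases (fun h => absurd h (lt_irrefl _)) (fun b _ => ?_) b
                exact h3 b
              · refine Fin.cases (fun h => absurd h (Fin.not_lt_zero _)) (fun b h => ?_) b
                exact h2 a b (Fin.succ_lt_succ_iff.1 h)
            · refine Fin.cases ?_ (fun i => ?_) i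
              · change 2*j+1 ≤ 2*N+1; omega
              · have := h3 i
                change m i ≤ 2*N+1; omega
        · refine (Fin.prod_univ_succ _).trans ?_
          simp
      · refine hs_congr hasSum_zero fun m => ?_
        rw [if_neg]
        rintro ⟨-, -, h3⟩
        have := h3 0
        change 2*j+1 ≤ 2*N+1 at this
        omega
    · simp only [TT]
      have := hasSum_sum_of_ne_finset_zero (L := SummationFilter.unconditional ℕ) (s := Finset.range (N+1))
        (f := fun j => if j < N + 1 then ((2 * (j:ℝ) + 1) ^ k)⁻¹ * TT K j else 0)
        (by intro b hb; rw [if_neg]; simpa using hb)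
      convert this using 1
      refine Finset.sum_congr rfl fun j hj => ?_
      rw [if_pos (Finset.mem_range.1 hj)]

lemma LtStar_hasSum (k : ℕ) (K : List ℕ) (z : ℝ) (hz : 0 ≤ z) (hz1 : z < 1) :
    HasSum (fun N : ℕ => z ^ (2*N+1) * (((2 * (N:ℝ) + 1) ^ k)⁻¹ * TT K N)) (LtStar (k :: K) z) := by
  have hsum : Summable (fun N : ℕ => z ^ (2*N+1) * (((2 * (N:ℝ) + 1) ^ k)⁻¹ * TT K N)) := by
    have h1 : Summable (fun n : ℕ => ((n:ℝ)) ^ K.length * (z ) ^ n) :=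
      summable_pow_mul_geometric_of_norm_lt_one _ (by rw [Real.norm_of_nonneg hz]; exact hz1)
    have h2 := (summable_nat_add_iff 1).2 h1
    refine Summable.of_nonneg_of_le
      (fun N => mul_nonneg (pow_nonneg hz _) (mul_nonneg (by positivity) (TT_nonneg K N))) ?_ h2
    intro N
    have h1 : ((2 * (N:ℝ) + 1) ^ k)⁻¹ ≤ 1 := by
      apply inv_le_one_of_one_le₀
      apply one_le_pow₀
      have : (0:ℝ) ≤ N := by positivity
      linarith
    have h3 : z ^ (2*N+1) ≤ z ^ (N+1) := pow_le_pow_of_le_one hz hz1.le (by omega)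
    have h4 : ((2 * (N:ℝ) + 1) ^ k)⁻¹ * TT K N ≤ ((N:ℝ)+1) ^ K.length :=
      calc _ ≤ 1 * TT K N := mul_le_mul_of_nonneg_right h1 (TT_nonneg K N)
        _ = TT K N := one_mul _
        _ ≤ _ := TT_le K N
    rw [mul_comm]
    push_cast
    exact mul_le_mul h4 h3 (pow_nonneg hz _) (by positivity)
  have key := cons_sum (n := K.length) (fun m : Fin (k :: K).length → ℕ =>
    if h : (∀ i, Odd (m i)) ∧ (∀ i j : Fin (k :: K).length, i < j → m j ≤ m i) ∧
        0 < (k :: K).length then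
      z ^ (m ⟨0, h.2.2⟩) * ∏ i, ((m i : ℝ) ^ (k :: K).get i)⁻¹
    else 0) ?_ ?_ _ _ ?_ hsum.hasSum
  · have h2 := key.tsum_eq
    rw [LtStar]
    have := hsum.hasSum
    rw [← h2] at this
    exact this
  · intro m
    split_ifs
    · positivity
    · exact le_rfl
  · intro m hm
    rw [dif_neg]
    exact fun h => hm (h.1 0)
  · intro j
    refine hs_congr (((tail_sum K j).mul_left (((2 * (j:ℝ) + 1) ^ k)⁻¹)).mul_left (z ^ (2*j+1))) fun m => ?_
    rw [mul_ite, mul_zero, mul_ite, mul_zero]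
    rw [← dite_eq_ite]
    refine dite_congr (propext ?_) (fun h => ?_) (fun _ => rfl)
    · constructor
      · rintro ⟨h1, h2, h3⟩
        refine ⟨fun i => h1 i.succ, fun a b hab => h2 a.succ b.succ (Fin.succ_lt_succ_iff.2 hab),
          fun i => h2 0 i.succ (Fin.succ_pos i)⟩
      · rintro ⟨h1, h2, h3⟩
        refine ⟨fun i => ?_, fun a b => ?_, by simp⟩
        · refine Fin.cases ?_ (fun i => ?_) i
          · exact ⟨j, rfl⟩
          · exact h1 i
        · refine Fin.cases ?_ (fun a => ?_) a
          · refine Fin.cases (fun h => absurd h (lt_irrefl _)) (fun b _ => ?_) b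
            exact h3 b
          · refine Fin.cases (fun h => absurd h (Fin.not_lt_zero _)) (fun b h => ?_) b
            exact h2 a b (Fin.succ_lt_succ_iff.1 h)
    · congr 1
      refine (Fin.prod_univ_succ _).trans ?_
      simp

lemma ff_key (u v w : ℝ) (hu : |u| < 1/4) (N : ℕ) :
    (1 - ff u v w N) * ((2 * (N:ℝ) + 1) * (2 * (N:ℝ) + 1 - u))
      = (2 * (N:ℝ) + 1 - u) * (2 * (N:ℝ) + 1 - v) - w := by
  have h0 : (0:ℝ) ≤ N := by positivity
  have := abs_lt.1 hu
  have h1 : 2 * (N:ℝ) + 1 - u ≠ 0 := by linarith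
  have h2 : 2 * (N:ℝ) + 1 ≠ 0 := by linarith
  unfold ff
  field_simp
  ring

lemma ff_lt (u v w : ℝ) (hu : |u| < 1/4) (hv : |v| < 1/4) (hw : |w| < 1/4) (N : ℕ) :
    ff u v w N < 1 := by
  have h0 : (0:ℝ) ≤ N := by positivity
  have := abs_lt.1 hu
  have := abs_lt.1 hv
  have := abs_lt.1 hw
  have h := ff_key u v w hu N
  have h1 : 0 < 2 * (N:ℝ) + 1 - u := by linarith
  have hp : 0 < (2 * (N:ℝ) + 1) * (2 * (N:ℝ) + 1 - u) := by positivity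
  have h3 : 0 < (2 * (N:ℝ) + 1 - u) * (2 * (N:ℝ) + 1 - v) - w := by nlinarith
  rw [← h] at h3
  have := pos_of_mul_pos_left h3 hp.le
  linarith

lemma ff_nonneg (u v w : ℝ) (hu : |u| < 1/4) (hv : 0 ≤ v) (hw : 0 ≤ w) (N : ℕ) :
    0 ≤ ff u v w N := by
  have h0 : (0:ℝ) ≤ N := by positivity
  have := abs_lt.1 hu
  have h1 : 0 < 2 * (N:ℝ) + 1 - u := by linarith
  unfold ff
  positivity

lemma dd_sum (u : ℝ) (hu : |u| < 1/4) (N : ℕ) :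
    HasSum (fun k => dd u k * ((2 * (N:ℝ) + 1) ^ k)⁻¹)
      (1 / ((2 * (N:ℝ) + 1) * (2 * (N:ℝ) + 1 - u))) := by
  have h0 : (0:ℝ) ≤ N := by positivity
  have := abs_lt.1 hu
  have h1 : 0 < 2 * (N:ℝ) + 1 - u := by linarith
  have h2 : 0 < 2 * (N:ℝ) + 1 := by linarith
  apply (hasSum_nat_add_iff' 2).1
  have hg : HasSum (fun n : ℕ => (u / (2 * (N:ℝ) + 1)) ^ n) (1 - u / (2 * (N:ℝ) + 1))⁻¹ := by
    apply hasSum_geometric_of_norm_lt_one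
    rw [Real.norm_eq_abs, abs_div, abs_of_pos h2, div_lt_one h2]
    linarith
  have hg2 := hg.mul_left (1 / (2 * (N:ℝ) + 1) ^ 2)
  have e : 1 / ((2 * (N:ℝ) + 1) * (2 * (N:ℝ) + 1 - u)) -
      ∑ i ∈ Finset.range 2, dd u i * ((2 * (N:ℝ) + 1) ^ i)⁻¹ =
      1 / (2 * (N:ℝ) + 1) ^ 2 * (1 - u / (2 * (N:ℝ) + 1))⁻¹ := by
    simp only [Finset.sum_range_succ, Finset.sum_range_zero, dd]
    have h3 : 1 - u / (2 * (N:ℝ) + 1) = (2 * (N:ℝ) + 1 - u) / (2 * (N:ℝ) + 1) := by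
      field_simp
    rw [h3]
    field_simp
    ring
  rw [e]
  refine hs_congr hg2 fun k => ?_
  simp only [dd]
  rw [div_pow]
  field_simp
  ring

lemma mulR {α β : Type*} {f : α → ℝ} {g : β → ℝ} {a b : ℝ} (hf : HasSum f a) (hg : HasSum g b) :
    HasSum (fun x : α × β => f x.1 * g x.2) (a * b) :=
  hf.mul hg (summable_mul_of_summable_norm hf.summable.norm hg.summable.norm)

lemma cc_sum (u v w : ℝ) (hu : |u| < 1/4) (N : ℕ) :
    HasSum (fun k => cc u v w k * ((2 * (N:ℝ) + 1) ^ k)⁻¹) (ff u v w N) := by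
  have h1 := (dd_sum u hu N).mul_left w
  have h2 : HasSum (fun k => if k = 1 then v / (2 * (N:ℝ) + 1) else 0) (v / (2 * (N:ℝ) + 1)) :=
    hasSum_ite_eq 1 _
  have h3 := h2.add h1
  have e : ff u v w N = v / (2 * (N:ℝ) + 1) +
    w * (1 / ((2 * (N:ℝ) + 1) * (2 * (N:ℝ) + 1 - u))) := by unfold ff; ring
  rw [e]
  refine hs_congr h3 fun k => ?_
  rcases k with _ | _ | k
  · simp [cc, dd]
  · simp [cc, dd]; rfl
  · simp [cc, dd]; ring

lemma cons_inj : Function.Injective (fun p : ℕ × List ℕ => p.1 :: p.2) := by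
  rintro ⟨a, b⟩ ⟨c, d⟩ h
  simpa using h

lemma hasSum_list {f : List ℕ → ℝ} {a : ℝ} (h : HasSum (fun p : ℕ × List ℕ => f (p.1 :: p.2)) a) :
    HasSum f (f [] + a) := by
  have h1 : HasSum (fun K : List ℕ => if K = [] then f [] else 0) (f []) := hasSum_ite_eq [] _
  have h2 : HasSum (fun K : List ℕ => if K = [] then 0 else f K) a := by
    rw [← cons_inj.hasSum_iff]
    · exact hs_congr h fun p => by simp
    · intro K hK
      rcases K with _ | ⟨k, K⟩
      · simp
      · exact absurd ⟨(k, K), rfl⟩ hK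
  refine hs_congr (h1.add h2) fun K => ?_
  by_cases hK : K = [] <;> simp [hK]

lemma cc_abs (u v w : ℝ) (k : ℕ) : |cc u v w k| = cc |u| |v| |w| k := by
  rcases k with _ | _ | k <;> simp [cc, abs_mul, abs_pow]

lemma dd_abs (u : ℝ) (k : ℕ) : |dd u k| = dd |u| k := by
  rcases k with _ | _ | k <;> simp [dd, abs_pow]

lemma cl_cons (u v w : ℝ) (k : ℕ) (K : List ℕ) :
    cl u v w (k :: K) = cc u v w k * cl u v w K := by simp [cl]

lemma cl_abs (u v w : ℝ) (K : List ℕ) : |cl u v w K| = cl |u| |v| |w| K := by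
  induction K with
  | nil => simp [cl]
  | cons k K ih => rw [cl_cons, cl_cons, abs_mul, cc_abs, ih]

lemma cc_nonneg {u v w : ℝ} (hu : 0 ≤ u) (hv : 0 ≤ v) (hw : 0 ≤ w) (k : ℕ) : 0 ≤ cc u v w k := by
  rcases k with _ | _ | k <;> simp only [cc] <;> positivity

lemma dd_nonneg {u : ℝ} (hu : 0 ≤ u) (k : ℕ) : 0 ≤ dd u k := by
  rcases k with _ | _ | k <;> simp only [dd] <;> positivity

lemma cl_nonneg {u v w : ℝ} (hu : 0 ≤ u) (hv : 0 ≤ v) (hw : 0 ≤ w) (K : List ℕ) :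
    0 ≤ cl u v w K := by
  induction K with
  | nil => simp [cl]
  | cons k K ih => rw [cl_cons]; exact mul_nonneg (cc_nonneg hu hv hw k) ih

noncomputable def AA (u v w : ℝ) : ℕ → ℕ → ℝ
  | 0, _ => 0
  | n+1, N => 1 + ∑ j ∈ Finset.range (N+1), ff u v w j * AA u v w n j

lemma rec_sum (u v w : ℝ) (hu4 : |u| < 1/4) (H : List ℕ → ℕ → ℝ) (A : ℕ → ℝ)
    (hH : ∀ j, HasSum (fun K => H K j) (A j)) (N : ℕ) :
    HasSum (fun p : ℕ × List ℕ => ∑ j ∈ Finset.range (N+1),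
        (cc u v w p.1 * ((2 * (j:ℝ) + 1) ^ p.1)⁻¹) * H p.2 j)
        (∑ j ∈ Finset.range (N+1), ff u v w j * A j) := by
  refine hasSum_sum fun j _ => ?_
  exact mulR (cc_sum u v w hu4 j) (hH j)

lemma AA_sum {u v w : ℝ} (hu : 0 ≤ u) (hv : 0 ≤ v) (hw : 0 ≤ w) (hu4 : |u| < 1/4) (n : ℕ) :
    ∀ N, HasSum (fun K : List ℕ => if K.length < n then cl u v w K * TT K N else 0)
      (AA u v w n N) := by
  induction n with
  | zero => intro N; simp [AA]
  | succ n ih =>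
    intro N
    have key := rec_sum u v w hu4 (fun K j => if K.length < n then cl u v w K * TT K j else 0) _ ih N
    have h2 := hasSum_list (f := fun K : List ℕ =>
      if K.length < n + 1 then cl u v w K * TT K N else 0) (hs_congr key fun p => ?_)
    · simpa [AA, cl, TT] using h2
    · by_cases h : p.2.length < n
      · simp only [List.length_cons, Nat.add_lt_add_iff_right, h, if_true, cl_cons, TT,
          Finset.mul_sum]
        exact Finset.sum_congr rfl fun j _ => by ring
      · simp [h]

lemma PP_zero (u v w : ℝ) : PP u v w 0 = (1 - ff u v w 0)⁻¹ := by simp [PP]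

lemma PP_succ (u v w : ℝ) (N : ℕ) :
    PP u v w (N+1) = PP u v w N * (1 - ff u v w (N+1))⁻¹ := by
  simp only [PP]; rw [Finset.prod_range_succ]

lemma PP_tel {u v w : ℝ} (h : ∀ N, ff u v w N < 1) (N : ℕ) :
    1 + ∑ j ∈ Finset.range (N+1), ff u v w j * PP u v w j = PP u v w N := by
  induction N with
  | zero =>
    have := sub_pos.2 (h 0)
    simp only [zero_add, Finset.sum_range_one, PP_zero]
    field_simp
    ring
  | succ N ih =>
    have := sub_pos.2 (h (N+1))
    rw [Finset.sum_range_succ, ← add_assoc, ih, PP_succ]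
    field_simp
    ring

lemma AA_le {u v w : ℝ} (h : ∀ N, ff u v w N < 1) (h0 : ∀ N, 0 ≤ ff u v w N) (n : ℕ) :
    ∀ N, AA u v w n N ≤ PP u v w N := by
  induction n with
  | zero =>
    intro N
    exact Finset.prod_nonneg fun j _ => inv_nonneg.2 (sub_nonneg.2 (h j).le)
  | succ n ih =>
    intro N
    rw [← PP_tel h]
    simp only [AA]
    gcongr with j hj
    · exact h0 j
    · exact ih j

lemma list_summable_nonneg {u v w : ℝ} (hu : 0 ≤ u) (hv : 0 ≤ v) (hw : 0 ≤ w) (hu4 : |u| < 1/4)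
    (hv4 : |v| < 1/4) (hw4 : |w| < 1/4) (N : ℕ) :
    Summable (fun K : List ℕ => cl u v w K * TT K N) := by
  have h0 : ∀ K, 0 ≤ cl u v w K * TT K N :=
    fun K => mul_nonneg (cl_nonneg hu hv hw K) (TT_nonneg K N)
  refine summable_of_sum_le (c := PP u v w N) h0 fun s => ?_
  refine le_trans ?_ (AA_le (ff_lt u v w hu4 hv4 hw4) (ff_nonneg u v w hu4 hv hw)
    (s.sup List.length + 1) N)
  refine le_trans ?_ (sum_le_hasSum s ?_ (AA_sum hu hv hw hu4 (s.sup List.length + 1) N))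
  · refine Finset.sum_le_sum fun K hK => ?_
    rw [if_pos]
    exact Nat.lt_succ_of_le (Finset.le_sup (f := List.length) hK)
  · intro K _
    split_ifs
    · exact h0 K
    · exact le_rfl

lemma list_summable {u v w : ℝ} (hu4 : |u| < 1/4)
    (hv4 : |v| < 1/4) (hw4 : |w| < 1/4) (N : ℕ) :
    Summable (fun K : List ℕ => ‖cl u v w K * TT K N‖) := by
  have := list_summable_nonneg (abs_nonneg u) (abs_nonneg v) (abs_nonneg w) (by rwa [abs_abs])
    (by rwa [abs_abs]) (by rwa [abs_abs]) N
  refine this.congr fun K => ?_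
  rw [Real.norm_eq_abs, abs_mul, cl_abs, abs_of_nonneg (TT_nonneg K N)]

lemma list_hasSum {u v w : ℝ} (hu4 : |u| < 1/4)
    (hv4 : |v| < 1/4) (hw4 : |w| < 1/4) (N : ℕ) :
    HasSum (fun K : List ℕ => cl u v w K * TT K N) (PP u v w N) := by
  obtain ⟨G, hG⟩ : ∃ G : ℕ → ℝ, ∀ N, HasSum (fun K : List ℕ => cl u v w K * TT K N) (G N) :=
    ⟨fun N => ∑' K, cl u v w K * TT K N,
      fun N => (list_summable hu4 hv4 hw4 N).of_norm.hasSum⟩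
  have hrec : ∀ N, G N = 1 + ∑ j ∈ Finset.range (N+1), ff u v w j * G j := by
    intro N
    have key : HasSum (fun p : ℕ × List ℕ => ∑ j ∈ Finset.range (N+1),
        (cc u v w p.1 * ((2 * (j:ℝ) + 1) ^ p.1)⁻¹) * (cl u v w p.2 * TT p.2 j))
        (∑ j ∈ Finset.range (N+1), ff u v w j * G j) := by
      refine hasSum_sum fun j _ => ?_
      exact mulR (cc_sum u v w hu4 j) (hG j)
    have h2 := hasSum_list (f := fun K : List ℕ => cl u v w K * TT K N) (hs_congr key fun p => ?_)
    · have := (hG N).unique h2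
      simpa [cl, TT] using this
    · simp only [cl_cons, TT, Finset.mul_sum]
      exact Finset.sum_congr rfl fun j _ => by ring
  have hGP : G N = PP u v w N := by
    have hlt := ff_lt u v w hu4 hv4 hw4
    induction N with
    | zero =>
      have := sub_pos.2 (hlt 0)
      have h := hrec 0
      simp only [zero_add, Finset.sum_range_one] at h
      rw [PP_zero, ← one_div, eq_div_iff this.ne']
      linarith
    | succ N ih =>
      have := sub_pos.2 (hlt (N+1))
      have h := hrec (N+1)
      rw [Finset.sum_range_succ, ← add_assoc, ← hrec N, ih] at h
      rw [PP_succ, ← div_eq_mul_inv, eq_div_iff this.ne']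
      linarith
  rw [← hGP]
  exact hG N

noncomputable def tm (u v w z : ℝ) (N : ℕ) : ℝ :=
  z ^ (2*N+1) * (1 / ((2 * (N:ℝ) + 1) * (2 * (N:ℝ) + 1 - u)) * PP u v w N)

lemma ff_tendsto (u v w : ℝ) : Filter.Tendsto (ff u v w) Filter.atTop (nhds 0) := by
  have h1 : Filter.Tendsto (fun N : ℕ => 2 * (N:ℝ) + 1) Filter.atTop Filter.atTop :=
    Filter.tendsto_atTop_add_const_right _ _
      (tendsto_natCast_atTop_atTop.const_mul_atTop (by norm_num))
  have h2 : Filter.Tendsto (fun N : ℕ => 2 * (N:ℝ) + 1 - u) Filter.atTop Filter.atTop := by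
    simpa [sub_eq_add_neg] using Filter.tendsto_atTop_add_const_right _ (-u) h1
  have h3 := (h1.const_div_atTop v).add ((h1.atTop_mul_atTop₀ h2).const_div_atTop w)
  rw [add_zero] at h3
  exact h3

lemma PP_pos {u v w : ℝ} (h : ∀ N, ff u v w N < 1) (N : ℕ) : 0 < PP u v w N :=
  Finset.prod_pos fun j _ => inv_pos.2 (sub_pos.2 (h j))

lemma tm_summable {u v w z : ℝ} (hu4 : |u| < 1/4) (hv4 : |v| < 1/4) (hw4 : |w| < 1/4)
    (hz : 0 ≤ z) (hz1 : z < 1) : Summable (tm u v w z) := by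
  have hlt := ff_lt u v w hu4 hv4 hw4
  have hu := abs_lt.1 hu4
  have hz2 : z ^ 2 < 1 := by nlinarith
  have hmpos : ∀ N : ℕ, 0 < (2 * (N:ℝ) + 1) * (2 * (N:ℝ) + 1 - u) := by
    intro N
    have h0 : (0:ℝ) ≤ N := by positivity
    have h1 : 0 < 2 * (N:ℝ) + 1 - u := by linarith
    positivity
  have htn : ∀ N, 0 ≤ tm u v w z N := by
    intro N
    have := hmpos N
    have := PP_pos hlt N
    unfold tm
    positivity
  have hlim : Filter.Tendsto (fun N : ℕ => z ^ 2 * (1 - ff u v w (N+1))⁻¹) Filter.atTop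
      (nhds (z ^ 2)) := by
    have h1 := (ff_tendsto u v w).comp (Filter.tendsto_add_atTop_nat 1)
    have h2 := ((h1.const_sub 1).inv₀ (by norm_num)).const_mul (z ^ 2)
    simpa using h2
  obtain ⟨r, hr1, hr2⟩ := exists_between hz2
  refine summable_of_ratio_norm_eventually_le hr2 ?_
  filter_upwards [hlim.eventually (gt_mem_nhds hr1)] with N hN
  rw [Real.norm_of_nonneg (htn _), Real.norm_of_nonneg (htn _)]
  have e : tm u v w z (N+1) = (z ^ 2 * (1 - ff u v w (N+1))⁻¹) * (z ^ (2*N+1) *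
      (1 / ((2 * ((N+1:ℕ):ℝ) + 1) * (2 * ((N+1:ℕ):ℝ) + 1 - u)) * PP u v w N)) := by
    unfold tm
    rw [PP_succ]
    ring
  rw [e]
  have hP := (PP_pos hlt N).le
  have h1 : z ^ (2*N+1) *
      (1 / ((2 * ((N+1:ℕ):ℝ) + 1) * (2 * ((N+1:ℕ):ℝ) + 1 - u)) * PP u v w N) ≤ tm u v w z N := by
    unfold tm
    have : 1 / ((2 * ((N+1:ℕ):ℝ) + 1) * (2 * ((N+1:ℕ):ℝ) + 1 - u)) ≤
        1 / ((2 * (N:ℝ) + 1) * (2 * (N:ℝ) + 1 - u)) := by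
      apply one_div_le_one_div_of_le (hmpos N)
      push_cast
      have h0 : (0:ℝ) ≤ N := by positivity
      nlinarith
    gcongr
  have h2 : 0 ≤ z ^ (2*N+1) *
      (1 / ((2 * ((N+1:ℕ):ℝ) + 1) * (2 * ((N+1:ℕ):ℝ) + 1 - u)) * PP u v w N) := by
    have := hmpos (N+1)
    positivity
  have hr0 : 0 ≤ r := (sq_nonneg z).trans hr1.le
  exact mul_le_mul hN.le h1 h2 hr0

noncomputable def FF (u v w z : ℝ) (q : ℕ × (ℕ × List ℕ)) : ℝ :=
  z ^ (2*q.1+1) * ((dd u q.2.1 * ((2 * (q.1:ℝ) + 1) ^ q.2.1)⁻¹) * (cl u v w q.2.2 * TT q.2.2 q.1))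

lemma FF_fiber {u v w z : ℝ} (hu4 : |u| < 1/4) (hv4 : |v| < 1/4) (hw4 : |w| < 1/4) (N : ℕ) :
    HasSum (fun p => FF u v w z (N, p)) (tm u v w z N) :=
  (mulR (dd_sum u hu4 N) (list_hasSum hu4 hv4 hw4 N)).mul_left _

lemma FF_hasSum {u v w z : ℝ} (hu4 : |u| < 1/4) (hv4 : |v| < 1/4) (hw4 : |w| < 1/4)
    (hz : 0 ≤ z) (hz1 : z < 1) : HasSum (FF u v w z) (∑' N, tm u v w z N) := by
  have hu' : |(|u|)| < 1/4 := by rwa [abs_abs]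
  have hv' : |(|v|)| < 1/4 := by rwa [abs_abs]
  have hw' : |(|w|)| < 1/4 := by rwa [abs_abs]
  have habs : ∀ q, ‖FF u v w z q‖ = FF |u| |v| |w| z q := by
    rintro ⟨N, k, K⟩
    have h1 : (0:ℝ) ≤ ((2 * (N:ℝ) + 1) ^ k)⁻¹ := by positivity
    simp only [FF, Real.norm_eq_abs, abs_mul, cl_abs, dd_abs, abs_of_nonneg (TT_nonneg K N),
      abs_of_nonneg (pow_nonneg hz _), abs_of_nonneg h1]
  have h0 : ∀ q, 0 ≤ FF |u| |v| |w| z q := fun q => by rw [← habs]; exact norm_nonneg _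
  have hs : Summable (FF u v w z) := by
    apply Summable.of_norm
    simp only [habs]
    exact (hasSum_prod_nonneg h0 (fun N => FF_fiber hu' hv' hw' N)
      (tm_summable hu' hv' hw' hz hz1).hasSum).summable
  have := hs.hasSum.prod_fiberwise (fun N => FF_fiber hu4 hv4 hw4 N)
  rw [this.tsum_eq]
  exact hs.hasSum

noncomputable def fL (u v w z : ℝ) : List ℕ → ℝ
  | [] => 0
  | k :: K => dd u k * cl u v w K * LtStar (k :: K) z

lemma fL_hasSum {u v w z : ℝ} (hu4 : |u| < 1/4) (hv4 : |v| < 1/4) (hw4 : |w| < 1/4)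
    (hz : 0 ≤ z) (hz1 : z < 1) : HasSum (fL u v w z) (∑' N, tm u v w z N) := by
  have h1 := FF_hasSum hu4 hv4 hw4 hz hz1
  have h2 := ((Equiv.prodComm (ℕ × List ℕ) ℕ).hasSum_iff).2 h1
  have h3 := h2.prod_fiberwise (g := fun p => dd u p.1 * cl u v w p.2 * LtStar (p.1 :: p.2) z) ?_
  · have := hasSum_list (f := fL u v w z) h3
    simpa [fL] using this
  · rintro ⟨k, K⟩
    refine hs_congr ((LtStar_hasSum k K z hz hz1).mul_left (dd u k * cl u v w K)) fun N => ?_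
    simp only [Function.comp, Equiv.prodComm_apply, Prod.swap, FF]
    ring

lemma cl_stats (u v w : ℝ) (K : List ℕ) (h : ∀ i ∈ K, 1 ≤ i) : ∃ a b s : ℕ,
    K.sum = a + b + 2 * s ∧ K.length = b + s ∧ K.countP (fun i => decide (2 ≤ i)) = s ∧
    cl u v w K = u ^ a * v ^ b * w ^ s := by
  induction K with
  | nil => exact ⟨0, 0, 0, by simp [cl]⟩
  | cons k K ih =>
    obtain ⟨a, b, s, h1, h2, h3, h4⟩ := ih fun i hi => h i (List.mem_cons_of_mem _ hi)
    have hk := h k List.mem_cons_self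
    rcases k with _ | _ | k
    · omega
    · refine ⟨a, b+1, s, ?_, ?_, ?_, ?_⟩
      · rw [List.sum_cons, h1]; ring
      · rw [List.length_cons, h2]; ring
      · rw [List.countP_cons, h3]; simp
      · rw [cl_cons, h4]; simp only [cc, zero_add]; ring
    · refine ⟨a+k, b, s+1, ?_, ?_, ?_, ?_⟩
      · rw [List.sum_cons, h1]; ring
      · rw [List.length_cons, h2]; ring
      · rw [List.countP_cons, h3]; simp
      · rw [cl_cons, h4]; simp only [cc]; ring

lemma cl_zero (u v w : ℝ) (K : List ℕ) (h : ¬ ∀ i ∈ K, 1 ≤ i) : cl u v w K = 0 := by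
  push Not at h
  obtain ⟨i, hi, h1⟩ := h
  have : i = 0 := by omega
  subst this
  exact List.prod_eq_zero (List.mem_map.2 ⟨0, hi, rfl⟩)

def gst (K : List ℕ) : ℕ × ℕ × ℕ :=
  (K.sum - K.length - K.countP (fun i => decide (2 ≤ i)),
    K.length - K.countP (fun i => decide (2 ≤ i)), K.countP (fun i => decide (2 ≤ i)) - 1)

lemma fiber_eq (u v w z : ℝ) (p : ℕ × ℕ × ℕ) :
    ∑' K : gst ⁻¹' {p}, fL u v w z K =
      G0hzStar (p.1 + p.2.1 + 2 * p.2.2 + 2) (p.2.1 + p.2.2 + 1) (p.2.2 + 1) z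
            * u ^ p.1 * v ^ p.2.1 * w ^ p.2.2 := by
  rw [tsum_subtype (gst ⁻¹' {p}) (fL u v w z), G0hzStar, ← tsum_mul_right, ← tsum_mul_right,
    ← tsum_mul_right]
  refine tsum_congr fun K => ?_
  obtain ⟨p1, p2, p3⟩ := p
  rcases K with _ | ⟨k, K⟩
  · rw [if_neg (by simp [Admissible])]
    simp [Set.indicator, fL]
  · by_cases hA : Admissible (k :: K)
    · obtain ⟨hA1, hA2⟩ := hA
      obtain ⟨a, b, s, h1, h2, h3, h4⟩ := cl_stats u v w K
        fun i hi => hA1 i (List.mem_cons_of_mem _ hi)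
      simp only [List.headI] at hA2
      obtain ⟨k, rfl⟩ : ∃ k', k = k' + 2 := ⟨k - 2, by omega⟩
      have hc : ((k + 2) :: K).countP (fun i => decide (2 ≤ i)) = s + 1 := by
        rw [List.countP_cons, h3]; simp
      have hg : gst ((k + 2) :: K) = (k + a, b, s) := by
        simp only [gst, hc, List.sum_cons, List.length_cons, h1, h2]
        refine Prod.ext ?_ (Prod.ext ?_ ?_) <;> simp only <;> omega
      by_cases hp : (k + a, b, s) = (p1, p2, p3)
      · rw [Set.indicator_of_mem (by simp [hg, hp]), if_pos]
        · obtain ⟨rfl, rfl, rfl⟩ : k + a = p1 ∧ b = p2 ∧ s = p3 := by simpa using hp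
          simp only [fL, h4, dd]
          ring
        · obtain ⟨rfl, rfl, rfl⟩ : k + a = p1 ∧ b = p2 ∧ s = p3 := by simpa using hp
          refine ⟨⟨hA1, by simp [List.headI]⟩, ?_, ?_, hc⟩
          · rw [List.sum_cons, h1]; ring
          · rw [List.length_cons, h2]
      · rw [Set.indicator_of_notMem (by simpa [hg] using hp), if_neg]
        · simp
        · rintro ⟨-, e1, e2, e3⟩
          rw [hc] at e3
          rw [List.sum_cons, h1] at e1
          rw [List.length_cons, h2] at e2
          simp only at e1 e2 e3
          apply hp
          refine Prod.ext ?_ (Prod.ext ?_ ?_) <;> simp only <;> omega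
    · rw [if_neg (fun h => hA h.1)]
      have : fL u v w z (k :: K) = 0 := by
        by_cases hK : ∀ i ∈ K, 1 ≤ i
        · rcases k with _ | _ | k
          · simp [fL, dd]
          · simp [fL, dd]
          · exfalso
            apply hA
            refine ⟨?_, by simp [List.headI]⟩
            intro i hi
            rcases List.mem_cons.1 hi with rfl | hi
            · omega
            · exact hK i hi
        · simp [fL, cl_zero u v w K hK]
      simp [Set.indicator, this]

lemma poch_succ (a : ℂ) (n : ℕ) : poch a (n+1) = poch a n * (a + n) := by
  simp [poch, Finset.prod_range_succ]

lemma poch_one (n : ℕ) : poch 1 n = (n.factorial : ℂ) := by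
  induction n with
  | zero => simp [poch]
  | succ n ih => rw [poch_succ, ih, Nat.factorial_succ]; push_cast; ring

lemma den_pos (u v w : ℝ) (hu : |u| < 1/4) (hv : |v| < 1/4) (hw : |w| < 1/4) (N : ℕ) :
    0 < (2 * (N:ℝ) + 1 - u) * (2 * (N:ℝ) + 1 - v) - w := by
  have h0 : (0:ℝ) ≤ N := by positivity
  have := abs_lt.1 hu
  have := abs_lt.1 hv
  have := abs_lt.1 hw
  nlinarith

lemma tm_eq {u v w : ℝ} (z : ℝ) (hu : |u| < 1/4) (hv : |v| < 1/4) (hw : |w| < 1/4)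
    (α β : ℂ) (h1 : α + β = 3 - (u : ℂ) / 2 - (v : ℂ) / 2)
    (h2 : α * β = (9 - 3 * (u : ℂ) - 3 * (v : ℂ) + (u : ℂ) * (v : ℂ) - (w : ℂ)) / 4) (N : ℕ) :
    ((tm u v w z N : ℝ) : ℂ) = (z : ℂ) / (1 - (u : ℂ) - (v : ℂ) + (u : ℂ) * (v : ℂ) - (w : ℂ)) *
      (poch ((1 - (u : ℂ)) / 2) N * poch (1 / 2) N * poch 1 N /
      ((N.factorial : ℂ) * poch α N * poch β N) * ((z : ℂ) ^ 2) ^ N) := by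
  have hlt := ff_lt u v w hu hv hw
  have hu' := abs_lt.1 hu
  have hfac : ∀ N : ℕ, (N.factorial : ℂ) ≠ 0 := fun N => by exact_mod_cast N.factorial_ne_zero
  have hD : ∀ N : ℕ, (2 * (N:ℂ) + 1 - u) * (2 * (N:ℂ) + 1 - v) - w ≠ 0 := by
    intro N
    have := (den_pos u v w hu hv hw N).ne'
    exact_mod_cast this
  have hmu : ∀ N : ℕ, (2 * (N:ℂ) + 1 - u) ≠ 0 := by
    intro N
    have h0 : (0:ℝ) ≤ N := by positivity
    have : (2 * (N:ℝ) + 1 - u) ≠ 0 := by linarith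
    exact_mod_cast this
  have hm : ∀ N : ℕ, (2 * (N:ℂ) + 1) ≠ 0 := by
    intro N
    exact_mod_cast (show 2 * N + 1 ≠ 0 by omega)
  have hff : ∀ N : ℕ, (((1 - ff u v w N)⁻¹ : ℝ) : ℂ) = (2 * (N:ℂ) + 1) * (2 * (N:ℂ) + 1 - u) /
      ((2 * (N:ℂ) + 1 - u) * (2 * (N:ℂ) + 1 - v) - w) := by
    intro N
    have h := ff_key u v w hu N
    have h3 := (sub_pos.2 (hlt N)).ne'
    have h4 := (den_pos u v w hu hv hw N).ne'
    have : (1 - ff u v w N)⁻¹ = (2 * (N:ℝ) + 1) * (2 * (N:ℝ) + 1 - u) /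
      ((2 * (N:ℝ) + 1 - u) * (2 * (N:ℝ) + 1 - v) - w) := by
      rw [eq_div_iff h4, ← h]
      field_simp
    rw [this]
    push_cast
    rfl
  have hab : ∀ N : ℕ, (α + N) * (β + N) =
      ((2 * ((N+1:ℕ):ℂ) + 1 - u) * (2 * ((N+1:ℕ):ℂ) + 1 - v) - w) / 4 := by
    intro N
    push_cast
    linear_combination h2 + (N:ℂ) * h1
  have hab0 : ∀ N : ℕ, (α + N) ≠ 0 ∧ (β + N) ≠ 0 := by
    intro N
    rw [← mul_ne_zero_iff, hab]
    exact div_ne_zero (hD _) (by norm_num)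
  have hpa : ∀ N, poch α N ≠ 0 := fun N => Finset.prod_ne_zero_iff.2 fun i _ => (hab0 i).1
  have hpb : ∀ N, poch β N ≠ 0 := fun N => Finset.prod_ne_zero_iff.2 fun i _ => (hab0 i).2
  induction N with
  | zero =>
    have e := hff 0
    have d0 := hD 0
    have m0 := hmu 0
    simp only [Nat.cast_zero, mul_zero, zero_add] at e d0 m0
    have d1 : 1 - (u : ℂ) - (v : ℂ) + (u : ℂ) * (v : ℂ) - (w : ℂ) =
      (1 - (u:ℂ)) * (1 - (v:ℂ)) - w := by ring
    simp only [tm, PP_zero, d1]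
    rw [Complex.ofReal_mul, Complex.ofReal_mul, e]
    simp [poch]
    field_simp
  | succ N ih =>
    have e : ((tm u v w z (N+1) : ℝ) : ℂ) = (tm u v w z N : ℂ) * ((z:ℂ)^2 *
        ((2 * (N:ℂ) + 1) * (2 * (N:ℂ) + 1 - u)) / (4 * ((α + N) * (β + N)))) := by
      rw [hab]
      simp only [tm, PP_succ]
      rw [Complex.ofReal_mul, Complex.ofReal_mul, Complex.ofReal_mul, hff (N+1)]
      rw [Complex.ofReal_mul, Complex.ofReal_mul]
      have a1 := hD (N+1)
      have a2 := hmu (N+1)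
      have a3 := hm (N+1)
      have a4 := hmu N
      have a5 := hm N
      simp only [Complex.ofReal_div, Complex.ofReal_mul, Complex.ofReal_sub, Complex.ofReal_add,
        Complex.ofReal_one, Complex.ofReal_natCast, Complex.ofReal_ofNat, Complex.ofReal_pow]
      field_simp
      ring
    rw [e, ih]
    simp only [poch_succ, poch_one, Nat.factorial_succ]
    have := hfac N
    have := hpa N
    have := hpb N
    obtain ⟨_, _⟩ := hab0 N
    have hN1 : (N:ℂ) + 1 ≠ 0 := by exact_mod_cast Nat.succ_ne_zero N
    push_cast
    field_simp
    ring

/-- Theorem 3.4: for `0 ≤ z < 1`,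
`∑ G₀*(k,n,s;z) u^{k-n-s} v^{n-s} w^{s-1}
 = (z/(1-u-v+uv-w)) ⬝ ₃F₂((1-u)/2, 1/2, 1; α*, β*; z²)`
where `α* + β* = 3 - u/2 - v/2` and `α*β* = (9 - 3u - 3v + uv - w)/4`. -/
theorem phi0_star_eq_hyp3F2 :
    ∃ δ > (0 : ℝ), ∀ u v w : ℝ, |u| < δ → |v| < δ → |w| < δ →
      ∀ z : ℝ, 0 ≤ z → z < 1 →
        Summable (fun p : ℕ × ℕ × ℕ =>
          G0hzStar (p.1 + p.2.1 + 2 * p.2.2 + 2) (p.2.1 + p.2.2 + 1) (p.2.2 + 1) z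
            * u ^ p.1 * v ^ p.2.1 * w ^ p.2.2) ∧
        ∀ αs βs : ℂ, αs + βs = 3 - (u : ℂ) / 2 - (v : ℂ) / 2 →
          αs * βs = (9 - 3 * (u : ℂ) - 3 * (v : ℂ) + (u : ℂ) * (v : ℂ) - (w : ℂ)) / 4 →
          ((∑' p : ℕ × ℕ × ℕ,
              G0hzStar (p.1 + p.2.1 + 2 * p.2.2 + 2) (p.2.1 + p.2.2 + 1) (p.2.2 + 1) z
                * u ^ p.1 * v ^ p.2.1 * w ^ p.2.2 : ℝ) : ℂ)
            = (z : ℂ) / (1 - (u : ℂ) - (v : ℂ) + (u : ℂ) * (v : ℂ) - (w : ℂ)) *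
                hyp3F2 ((1 - (u : ℂ)) / 2) (1 / 2) 1 αs βs ((z : ℂ) ^ 2) := by
  refine ⟨1/4, by norm_num, fun u v w hu hv hw z hz hz1 => ?_⟩
  have h := (fL_hasSum hu hv hw hz hz1).tsum_fiberwise gst
  simp only [fiber_eq] at h
  refine ⟨h.summable, fun α β h1 h2 => ?_⟩
  rw [h.tsum_eq, Complex.ofReal_tsum, hyp3F2, ← tsum_mul_left]
  exact tsum_congr fun N => tm_eq z hu hv hw α β h1 h2 N
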